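/- arXiv:1406.1977 — 4 statements merged into one kernel-verified Lean document; each statement's English description precedes it below -/
import Mathlib

section
/- Let m ≥ 2 be an even integer and let p be a real number with p ≥ 2m. The m-homogeneous polynomial P_m on ℝ^m defined by P_m(x_1,…,x_m) = (x_1² − x_2²)(x_3² − x_4²)⋯(x_{m−1}² − x_m²) satisfies sup{|P_m(x)| : ‖x‖_p ≤ 1} = (m/2)^{−m/p}, the supremum being attained at the point whose odd-indexed coordinates equal (m/2)^{−1/p} and whose even-indexed coordinates are 0. -/
open Finset

/-- The `ℓ_p` norm on `ℝ^n` for a real exponent `p`. -/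
noncomputable def lpNorm {n : ℕ} (p : ℝ) (x : Fin n → ℝ) : ℝ :=
  (∑ i, |x i| ^ p) ^ (1 / p)

theorem sum_pairs_range (F : ℕ → ℝ) (k : ℕ) :
    ∑ i ∈ Finset.range (2 * k), F i = ∑ j ∈ Finset.range k, (F (2 * j) + F (2 * j + 1)) := by
  induction k with
  | zero => simp
  | succ k ih =>
    rw [show 2 * (k + 1) = 2 * k + 1 + 1 by ring, Finset.sum_range_succ, Finset.sum_range_succ,
      ih, Finset.sum_range_succ]
    ring

theorem sum_pairs_fin (m : ℕ) (hme : Even m) (f : Fin m → ℝ)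
    (h0 : ∀ j : Fin (m / 2), 2 * j.1 < m) (h1 : ∀ j : Fin (m / 2), 2 * j.1 + 1 < m) :
    ∑ i, f i = ∑ j : Fin (m / 2), (f ⟨2 * j.1, h0 j⟩ + f ⟨2 * j.1 + 1, h1 j⟩) := by
  have hm2 : 2 * (m / 2) = m := Nat.two_mul_div_two_of_even hme
  let F : ℕ → ℝ := fun n => if h : n < m then f ⟨n, h⟩ else 0
  have h1 : ∑ i, f i = ∑ i ∈ Finset.range m, F i := by
    rw [← Fin.sum_univ_eq_sum_range]
    exact Finset.sum_congr rfl fun i _ => by simp [F]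
  have h2 := sum_pairs_range F (m / 2)
  rw [hm2] at h2
  rw [h1, h2, ← Fin.sum_univ_eq_sum_range (fun j => F (2 * j) + F (2 * j + 1))]
  refine Finset.sum_congr rfl fun j _ => ?_
  have h3 : 2 * j.1 < m := by have := j.2; omega
  have h4 : 2 * j.1 + 1 < m := by have := j.2; omega
  simp [F, h3, h4]

theorem abs_sq_sub_sq_rpow_le (a b p : ℝ) (hp : 0 < p) :
    |a ^ 2 - b ^ 2| ^ (p / 2) ≤ |a| ^ p + |b| ^ p := by
  have key : ∀ c : ℝ, (c ^ 2) ^ (p / 2) = |c| ^ p := by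
    intro c
    rw [← sq_abs c, ← Real.rpow_natCast, ← Real.rpow_mul (abs_nonneg c)]
    congr 1
    push_cast
    ring
  have ha := Real.rpow_nonneg (abs_nonneg a) p
  have hb := Real.rpow_nonneg (abs_nonneg b) p
  rcases le_total (a ^ 2) (b ^ 2) with h | h
  · have : |a ^ 2 - b ^ 2| ≤ b ^ 2 := by
      rw [abs_le]; constructor <;> nlinarith [sq_nonneg a, sq_nonneg b]
    have := Real.rpow_le_rpow (abs_nonneg _) this (by positivity : 0 ≤ p / 2)
    rw [key] at this
    linarith
  · have : |a ^ 2 - b ^ 2| ≤ a ^ 2 := by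
      rw [abs_le]; constructor <;> nlinarith [sq_nonneg a, sq_nonneg b]
    have := Real.rpow_le_rpow (abs_nonneg _) this (by positivity : 0 ≤ p / 2)
    rw [key] at this
    linarith

/-- For even `m ≥ 2` and `p ≥ 2m`, the polynomial
`P_m(x) = (x_1² - x_2²)⋯(x_{m-1}² - x_m²)` on `ℝ^m` has sup norm `(m/2)^{-m/p}` over the
unit ball of `ℓ_p^m`, attained at the point whose odd-indexed coordinates (0-based even
indices) equal `(m/2)^{-1/p}` and whose remaining coordinates vanish. -/
theorem even_product_polynomial_norm (m : ℕ) (hm : 2 ≤ m) (hme : Even m)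
    (p : ℝ) (hp : 2 * (m : ℝ) ≤ p) :
    let P : (Fin m → ℝ) → ℝ := fun x =>
      ∏ j : Fin (m / 2),
        (x ⟨2 * j.1, by have := j.2; omega⟩ ^ 2 - x ⟨2 * j.1 + 1, by have := j.2; omega⟩ ^ 2)
    let x₀ : Fin m → ℝ := fun i => if i.1 % 2 = 0 then ((m : ℝ) / 2) ^ (-(1 : ℝ) / p) else 0
    lpNorm p x₀ ≤ 1 ∧ P x₀ = ((m : ℝ) / 2) ^ (-(m : ℝ) / p) ∧
      ∀ x : Fin m → ℝ, lpNorm p x ≤ 1 → |P x| ≤ ((m : ℝ) / 2) ^ (-(m : ℝ) / p) := by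
  intro P x₀
  have hm2 : 2 * (m / 2) = m := Nat.two_mul_div_two_of_even hme
  have hmR : (2 : ℝ) ≤ m := by exact_mod_cast hm
  have hp0 : 0 < p := by linarith
  have hk0 : (0 : ℝ) < (m : ℝ) / 2 := by linarith
  have hkc : ((m / 2 : ℕ) : ℝ) = (m : ℝ) / 2 := by
    have : (2 : ℝ) * ((m / 2 : ℕ) : ℝ) = m := by exact_mod_cast hm2
    linarith
  have hodd : ∀ j : ℕ, (2 * j + 1) % 2 = 1 := fun j => by omega
  have hi0 : ∀ j : Fin (m / 2), 2 * j.1 < m := fun j => by have := j.2; omega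
  have hi1 : ∀ j : Fin (m / 2), 2 * j.1 + 1 < m := fun j => by have := j.2; omega
  refine ⟨?_, ?_, ?_⟩
  · have hs : ∑ i, |x₀ i| ^ p = 1 := by
      rw [sum_pairs_fin m hme _ hi0 hi1]
      simp only [x₀, hodd, Nat.mul_mod_right, if_true, one_ne_zero, if_false, abs_zero,
        Real.zero_rpow hp0.ne', add_zero, Finset.sum_const, Finset.card_univ, Fintype.card_fin,
        nsmul_eq_mul]
      rw [abs_of_nonneg (Real.rpow_nonneg hk0.le _), ← Real.rpow_mul hk0.le, hkc,
        div_mul_cancel₀ _ hp0.ne', Real.rpow_neg_one, mul_inv_cancel₀ hk0.ne']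
    unfold lpNorm
    rw [hs, Real.one_rpow]
  · simp only [P, x₀, hodd, Nat.mul_mod_right, if_true, one_ne_zero, if_false,
      Finset.prod_const, Finset.card_univ, Fintype.card_fin]
    rw [zero_pow two_ne_zero, sub_zero, ← pow_mul, hm2, ← Real.rpow_natCast,
      ← Real.rpow_mul hk0.le]
    congr 1
    ring
  · intro x hx
    have hS0 : 0 ≤ ∑ i, |x i| ^ p :=
      Finset.sum_nonneg fun i _ => Real.rpow_nonneg (abs_nonneg _) _
    have hS : ∑ i, |x i| ^ p ≤ 1 := by
      unfold lpNorm at hx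
      by_contra hcon
      push Not at hcon
      exact absurd hx (not_le.mpr (Real.one_lt_rpow hcon (by positivity)))
    rw [sum_pairs_fin m hme _ hi0 hi1] at hS
    let d : Fin (m / 2) → ℝ := fun j =>
      |x ⟨2 * j.1, by have := j.2; omega⟩ ^ 2 - x ⟨2 * j.1 + 1, by have := j.2; omega⟩ ^ 2|
    have hd0 : ∀ j, 0 ≤ d j := fun j => abs_nonneg _
    have hPd : |P x| = ∏ j, d j := Finset.abs_prod _ _
    have hD : ∑ j, d j ^ (p / 2) ≤ 1 :=
      (Finset.sum_le_sum fun j _ => abs_sq_sub_sq_rpow_le _ _ p hp0).trans hS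
    have hamgm := Real.geom_mean_le_arith_mean_weighted Finset.univ
      (fun _ : Fin (m / 2) => ((m : ℝ) / 2)⁻¹) (fun j => d j ^ (p / 2))
      (fun _ _ => (inv_pos.mpr hk0).le)
      (by simp [hkc]; field_simp)
      (fun j _ => Real.rpow_nonneg (hd0 j) _)
    rw [← Finset.mul_sum] at hamgm
    have h1 : (∏ j, d j) ^ (p / m) ≤ ((m : ℝ) / 2)⁻¹ := by
      rw [← Real.finsetProd_rpow _ _ (fun j _ => hd0 j)]
      calc ∏ j, d j ^ (p / m) = ∏ j, (d j ^ (p / 2)) ^ (((m : ℝ) / 2)⁻¹) := by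
            refine Finset.prod_congr rfl fun j _ => ?_
            rw [← Real.rpow_mul (hd0 j)]
            congr 1
            field_simp
        _ ≤ _ := hamgm
        _ ≤ ((m : ℝ) / 2)⁻¹ * 1 := mul_le_mul_of_nonneg_left hD (inv_pos.mpr hk0).le
        _ = _ := mul_one _
    have hprod0 : 0 ≤ ∏ j, d j := Finset.prod_nonneg fun j _ => hd0 j
    have h2 := Real.rpow_le_rpow (Real.rpow_nonneg hprod0 _) h1
      (by positivity : 0 ≤ (m : ℝ) / p)
    rw [← Real.rpow_mul hprod0, ← Real.rpow_neg_one, ← Real.rpow_mul hk0.le] at h2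
    have e1 : p / m * ((m : ℝ) / p) = 1 := by
      have : (m : ℝ) ≠ 0 := by linarith
      field_simp
    rw [e1, Real.rpow_one] at h2
    rw [hPd]
    convert h2 using 2
    ring
end

section
/- Let m ≥ 2 be an even integer and let p be a real number with 2m ≤ p < ∞. If D > 0 is such that for every n ≥ 1 and every m-homogeneous polynomial P(x) = ∑_{|α|=m} a_α x^α on the real space ℓ_p^n one has (∑_{|α|=m} |a_α|^{2mp/(mp+p−2m)})^{(mp+p−2m)/(2mp)} ≤ D·‖P‖, then D ≥ 2^{(mp+p−2m)/(4p)} · (m/2)^{m/p}. -/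
open Finset

/-- The sup norm of the `m`-homogeneous polynomial with coefficients `a`
over the unit ball of the real space `ℓ_p^n`. -/
noncomputable def polyNorm (p : ℝ) (m n : ℕ) (a : (Fin n → ℕ) → ℝ) : ℝ :=
  sSup {y : ℝ | ∃ x : Fin n → ℝ, lpNorm p x ≤ 1 ∧
    y = |∑ α ∈ Finset.Nat.antidiagonalTuple n m, a α * ∏ i, x i ^ α i|}


/-- The exponent selected by `S`. -/
def hlExp {k : ℕ} (S : Fin k → Fin 2) (j : Fin (k * 2)) : ℕ :=
  if (finProdFinEquiv.symm j).2 = S (finProdFinEquiv.symm j).1 then 2 else 0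

/-- The sign attached to `S`. -/
noncomputable def hlSign {k : ℕ} (S : Fin k → Fin 2) : ℝ :=
  ∏ i, (if S i = 0 then (1 : ℝ) else -1)

/-- The coefficients of `∏ (x_i^2 - y_i^2)`. -/
noncomputable def hlCoef (k : ℕ) (α : Fin (k * 2) → ℕ) : ℝ :=
  ∑ S : Fin k → Fin 2, if α = hlExp S then hlSign S else 0

lemma hlExp_inj {k : ℕ} : Function.Injective (hlExp (k := k)) := by
  intro S T hST
  funext i
  have := congrFun hST (finProdFinEquiv (i, S i))
  simp only [hlExp, Equiv.symm_apply_apply, if_true] at this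
  by_contra hne
  simp [hne] at this

lemma hlCoef_exp {k : ℕ} (S : Fin k → Fin 2) : hlCoef k (hlExp S) = hlSign S := by
  unfold hlCoef
  rw [Finset.sum_eq_single S]
  · simp
  · intro T _ hT
    rw [if_neg]
    intro h
    exact hT (hlExp_inj h).symm
  · simp

lemma hlCoef_zero {k : ℕ} (α : Fin (k * 2) → ℕ) (h : ∀ S, α ≠ hlExp S) : hlCoef k α = 0 := by
  unfold hlCoef
  exact Finset.sum_eq_zero fun S _ => if_neg (h S)

lemma hlSign_abs {k : ℕ} (S : Fin k → Fin 2) : |hlSign S| = 1 := by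
  unfold hlSign
  rw [Finset.abs_prod]
  apply Finset.prod_eq_one
  intro i _
  split_ifs <;> simp

lemma hlExp_mem {k : ℕ} (S : Fin k → Fin 2) :
    hlExp S ∈ Finset.Nat.antidiagonalTuple (k * 2) (k + k) := by
  rw [Finset.Nat.mem_antidiagonalTuple, ← finProdFinEquiv.sum_comp, Fintype.sum_prod_type]
  simp [hlExp]
  ring

lemma hl_sum {k : ℕ} (F : (Fin (k * 2) → ℕ) → ℝ) (hF : ∀ α, (∀ S, α ≠ hlExp S) → F α = 0) :
    ∑ α ∈ Finset.Nat.antidiagonalTuple (k * 2) (k + k), F α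
      = ∑ S : Fin k → Fin 2, F (hlExp S) := by
  symm
  apply Finset.sum_of_injOn hlExp hlExp_inj.injOn
  · intro S _
    exact hlExp_mem S
  · intro α _ hα
    apply hF
    intro S hS
    exact hα ⟨S, by simp, hS.symm⟩
  · intro S _
    rfl

lemma hl_eval {k : ℕ} (x : Fin (k * 2) → ℝ) :
    ∑ α ∈ Finset.Nat.antidiagonalTuple (k * 2) (k + k), hlCoef k α * ∏ i, x i ^ α i
      = ∏ i : Fin k, (x (finProdFinEquiv (i, 0)) ^ 2 - x (finProdFinEquiv (i, 1)) ^ 2) := by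
  rw [hl_sum _ (fun α hα => by rw [hlCoef_zero α hα, zero_mul])]
  have h1 : ∀ i : Fin k, x (finProdFinEquiv (i, 0)) ^ 2 - x (finProdFinEquiv (i, 1)) ^ 2
      = ∑ b : Fin 2, (if b = 0 then (1 : ℝ) else -1) * x (finProdFinEquiv (i, b)) ^ 2 := by
    intro i
    simp [Fin.sum_univ_two]
    ring
  simp_rw [h1]
  rw [Finset.prod_univ_sum, Fintype.piFinset_univ]
  apply Finset.sum_congr rfl
  intro S _
  rw [hlCoef_exp, Finset.prod_mul_distrib, hlSign]
  congr 1
  rw [← finProdFinEquiv.prod_comp, Fintype.prod_prod_type]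
  apply Finset.prod_congr rfl
  intro i _
  rw [Finset.prod_eq_single (S i)]
  · simp [hlExp]
  · intro b _ hb
    simp [hlExp, hb]
  · simp

lemma hl_factor (p : ℝ) (hp : 0 < p) (a b : ℝ) :
    |a ^ 2 - b ^ 2| ≤ (|a| ^ p + |b| ^ p) ^ (2 / p) := by
  have key : ∀ c : ℝ, c ^ 2 = (|c| ^ p) ^ (2 / p) := by
    intro c
    rw [← Real.rpow_mul (abs_nonneg c), mul_div_cancel₀ _ hp.ne']
    simp
  have ha : 0 ≤ |a| ^ p := by positivity
  have hb : 0 ≤ |b| ^ p := by positivity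
  have h1 : a ^ 2 ≤ (|a| ^ p + |b| ^ p) ^ (2 / p) := by
    rw [key a]
    exact Real.rpow_le_rpow ha (by linarith) (by positivity)
  have h2 : b ^ 2 ≤ (|a| ^ p + |b| ^ p) ^ (2 / p) := by
    rw [key b]
    exact Real.rpow_le_rpow hb (by linarith) (by positivity)
  rw [abs_le]
  constructor <;> nlinarith [sq_nonneg a, sq_nonneg b]

lemma hl_norm (k : ℕ) (hk : 1 ≤ k) (p : ℝ) (hp : 0 < p) :
    polyNorm p (k + k) (k * 2) (hlCoef k) ≤ ((1 : ℝ) / k) ^ (2 * (k : ℝ) / p) := by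
  have hk0 : (0 : ℝ) < k := by exact_mod_cast hk
  unfold polyNorm
  apply Real.sSup_le _ (by positivity)
  rintro y ⟨x, hx, rfl⟩
  rw [hl_eval, Finset.abs_prod]
  set z : Fin k → ℝ := fun i => |x (finProdFinEquiv (i, 0))| ^ p + |x (finProdFinEquiv (i, 1))| ^ p
    with hz
  have hz0 : ∀ i, 0 ≤ z i := fun i => by simp only [hz]; positivity
  have hsum : ∑ i, z i ≤ 1 := by
    have h1 : ∑ i, z i = ∑ j, |x j| ^ p := by
      rw [← finProdFinEquiv.sum_comp, Fintype.sum_prod_type]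
      simp [hz, Fin.sum_univ_two]
    rw [h1]
    by_contra hcon
    push Not at hcon
    have := Real.one_lt_rpow hcon (show 0 < 1 / p by positivity)
    unfold lpNorm at hx
    linarith
  have hamgm := Real.geom_mean_le_arith_mean_weighted Finset.univ (fun _ : Fin k => (1 : ℝ) / k) z
    (fun _ _ => by positivity) (by simp [hk0.ne']) (fun i _ => hz0 i)
  rw [← Finset.mul_sum] at hamgm
  have h2 : ∏ i, z i ^ ((1 : ℝ) / k) ≤ 1 / k :=
    hamgm.trans (by
      have : (0 : ℝ) ≤ 1 / k := by positivity
      nlinarith)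
  calc ∏ i : Fin k, |x (finProdFinEquiv (i, 0)) ^ 2 - x (finProdFinEquiv (i, 1)) ^ 2|
      ≤ ∏ i : Fin k, (z i ^ ((1 : ℝ) / k)) ^ (2 * (k : ℝ) / p) := by
        apply Finset.prod_le_prod (fun _ _ => abs_nonneg _)
        intro i _
        refine (hl_factor p hp _ _).trans (le_of_eq ?_)
        rw [← Real.rpow_mul (hz0 i)]
        congr 1
        field_simp
    _ = (∏ i : Fin k, z i ^ ((1 : ℝ) / k)) ^ (2 * (k : ℝ) / p) :=
        Real.finsetProd_rpow _ _ (fun i _ => Real.rpow_nonneg (hz0 i) _) _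
    _ ≤ _ := Real.rpow_le_rpow (Finset.prod_nonneg fun i _ => Real.rpow_nonneg (hz0 i) _) h2
        (by positivity)

/-- For even `m ≥ 2` and `2m ≤ p < ∞`, any constant `D` for the real
polynomial Hardy–Littlewood inequality satisfies `D ≥ 2^{(mp+p-2m)/(4p)} (m/2)^{m/p}`. -/
theorem real_HL_lower_bound_even (m : ℕ) (hm : 2 ≤ m) (hme : Even m)
    (p : ℝ) (hp : 2 * (m : ℝ) ≤ p) (D : ℝ) (hD : 0 < D)
    (h : ∀ n : ℕ, 1 ≤ n → ∀ a : (Fin n → ℕ) → ℝ,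
      (∑ α ∈ Finset.Nat.antidiagonalTuple n m, |a α|
          ^ (2 * (m : ℝ) * p / ((m : ℝ) * p + p - 2 * m)))
        ^ (((m : ℝ) * p + p - 2 * m) / (2 * (m : ℝ) * p)) ≤ D * polyNorm p m n a) :
    2 ^ (((m : ℝ) * p + p - 2 * m) / (4 * p)) * ((m : ℝ) / 2) ^ ((m : ℝ) / p) ≤ D := by
  obtain ⟨k, rfl⟩ := hme
  have hk : 1 ≤ k := by omega
  have hk0 : (0 : ℝ) < k := by exact_mod_cast hk
  push_cast at hp
  have hp0 : 0 < p := by linarith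
  have H := h (k * 2) (by omega) (hlCoef k)
  have hpos : (0 : ℝ) < ((k + k : ℕ) : ℝ) * p + p - 2 * ((k + k : ℕ) : ℝ) := by
    push_cast
    have : (0 : ℝ) < (k + k) * p := by positivity
    linarith
  have hq : (0 : ℝ) < 2 * ((k + k : ℕ) : ℝ) * p / (((k + k : ℕ) : ℝ) * p + p - 2 * ((k + k : ℕ) : ℝ)) := by
    apply div_pos _ hpos
    push_cast
    positivity
  rw [hl_sum _ (fun α hα => by rw [hlCoef_zero α hα, abs_zero, Real.zero_rpow hq.ne'])] at H
  simp only [hlCoef_exp, hlSign_abs, Real.one_rpow] at H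
  have H2 := H.trans (mul_le_mul_of_nonneg_left (hl_norm k hk p hp0) hD.le)
  have hc : (∑ _S : Fin k → Fin 2, (1 : ℝ)) = (2 : ℝ) ^ (k : ℝ) := by
    simp
  rw [hc, ← Real.rpow_mul (by norm_num)] at H2
  have he : (k : ℝ) * ((((k + k : ℕ) : ℝ) * p + p - 2 * ((k + k : ℕ) : ℝ)) / (2 * ((k + k : ℕ) : ℝ) * p))
      = (((k + k : ℕ) : ℝ) * p + p - 2 * ((k + k : ℕ) : ℝ)) / (4 * p) := by
    push_cast
    field_simp
    ring
  rw [he] at H2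
  have hkk : ((k + k : ℕ) : ℝ) = 2 * k := by push_cast; ring
  have e1 : ((k + k : ℕ) : ℝ) / 2 = k := by rw [hkk]; ring
  have e2 : ((k + k : ℕ) : ℝ) / p = 2 * (k : ℝ) / p := by rw [hkk]
  rw [e1, e2]
  have hw : (0 : ℝ) < (k : ℝ) ^ (2 * (k : ℝ) / p) := Real.rpow_pos_of_pos hk0 _
  rw [Real.div_rpow zero_le_one hk0.le, Real.one_rpow, mul_one_div, le_div_iff₀ hw] at H2
  exact H2
end

section
/- Let m ≥ 3 be an odd integer and let p be a real number with 2m ≤ p < ∞. If D > 0 is such that for every n ≥ 1 and every m-homogeneous polynomial P(x) = ∑_{|α|=m} a_α x^α on the real space ℓ_p^n one has (∑_{|α|=m} |a_α|^{2mp/(mp+p−2m)})^{(mp+p−2m)/(2mp)} ≤ D·‖P‖, then D ≥ 2^{(mp+p−2m)(m−1)/(4mp)} · ((m−1)/2)^{(m−1)/p}. -/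
open Finset

/-- exponents of the monomials of `z * ∏ (u_i^2 - v_i^2)` -/
def expo {k m : ℕ} (e : Option (Fin k × Bool) ≃ Fin m) (s : Fin k → Bool) : Fin m → ℕ :=
  fun j => match e.symm j with
    | none => 1
    | some (i, b) => if s i = b then 2 else 0

/-- sign of the coefficient -/
def sgnc {k : ℕ} (s : Fin k → Bool) : ℝ := ∏ i, (if s i then (1 : ℝ) else -1)

/-- coefficients -/
noncomputable def coef {k m : ℕ} (e : Option (Fin k × Bool) ≃ Fin m) (α : Fin m → ℕ) : ℝ :=
  ∑ s : Fin k → Bool, if α = expo e s then sgnc s else 0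

lemma expo_inj {k m : ℕ} (e : Option (Fin k × Bool) ≃ Fin m) : Function.Injective (expo e) := by
  intro s t h
  funext i
  have := congrFun h (e (some (i, t i)))
  simp only [expo, Equiv.symm_apply_apply] at this
  by_contra hne
  simp [hne] at this

lemma abs_sgnc {k : ℕ} (s : Fin k → Bool) : |sgnc s| = 1 := by
  unfold sgnc
  rw [Finset.abs_prod]
  apply Finset.prod_eq_one
  intro i _
  split_ifs <;> simp

lemma coef_expo {k m : ℕ} (e : Option (Fin k × Bool) ≃ Fin m) (s : Fin k → Bool) :
    coef e (expo e s) = sgnc s := by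
  unfold coef
  simp [(expo_inj e).eq_iff]

lemma expo_sum {k m : ℕ} (hk : m = 2 * k + 1) (e : Option (Fin k × Bool) ≃ Fin m)
    (s : Fin k → Bool) : expo e s ∈ Finset.Nat.antidiagonalTuple m m := by
  rw [Finset.Nat.mem_antidiagonalTuple]
  rw [← e.sum_comp]
  simp only [expo, Equiv.symm_apply_apply, Fintype.sum_option, Fintype.sum_prod_type]
  simp
  omega

lemma poly_eval {k m : ℕ} (hk : m = 2 * k + 1) (e : Option (Fin k × Bool) ≃ Fin m)
    (x : Fin m → ℝ) :
    ∑ α ∈ Finset.Nat.antidiagonalTuple m m, coef e α * ∏ i, x i ^ α i =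
      x (e none) * ∏ i : Fin k, (x (e (some (i, true))) ^ 2 - x (e (some (i, false))) ^ 2) := by
  have h1 : ∀ s, ∏ i, x i ^ (expo e s i) =
      x (e none) * ∏ i : Fin k, x (e (some (i, s i))) ^ 2 := by
    intro s
    rw [← e.prod_comp]
    simp only [expo, Equiv.symm_apply_apply, Fintype.prod_option, Fintype.prod_prod_type, pow_one]
    congr 1
    apply Finset.prod_congr rfl
    intro i _
    rw [Fintype.prod_bool]
    rcases Bool.eq_false_or_eq_true (s i) with hs | hs <;> simp [hs]
  have h2 : ∀ i : Fin k, x (e (some (i, true))) ^ 2 - x (e (some (i, false))) ^ 2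
      = ∑ b : Bool, (if b then (1 : ℝ) else -1) * x (e (some (i, b))) ^ 2 := by
    intro i; simp; ring
  simp only [h2]
  rw [Finset.prod_univ_sum, Finset.mul_sum]
  simp only [coef, Finset.sum_mul]
  rw [Finset.sum_comm]
  simp only [Fintype.piFinset_univ]
  apply Finset.sum_congr rfl
  intro s _
  rw [Finset.sum_eq_single (expo e s)]
  · rw [if_pos rfl, h1, sgnc, Finset.prod_mul_distrib]; ring
  · intro b _ hb; simp [hb]
  · intro hb; exact absurd (expo_sum hk e s) hb

lemma amgm {k : ℕ} (hk : 1 ≤ k) (t : Fin k → ℝ) (h0 : ∀ i, 0 ≤ t i) (h1 : ∑ i, t i ≤ 1) :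
    ∏ i, t i ≤ ((k : ℝ)⁻¹) ^ k := by
  have hk0 : (0 : ℝ) < k := by exact_mod_cast hk
  have := Real.geom_mean_le_arith_mean_weighted Finset.univ (fun _ : Fin k => (k : ℝ)⁻¹) t
    (fun _ _ => by positivity) (by simp [hk0.ne']) (fun i _ => h0 i)
  rw [Real.finsetProd_rpow _ _ (fun i _ => h0 i), ← Finset.mul_sum] at this
  have hP : 0 ≤ ∏ i, t i := Finset.prod_nonneg fun i _ => h0 i
  have h3 : (∏ i, t i) ^ ((k : ℝ)⁻¹) ≤ (k : ℝ)⁻¹ :=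
    this.trans (mul_le_of_le_one_right (by positivity) h1)
  have h4 := pow_le_pow_left₀ (by positivity) h3 k
  rwa [Real.rpow_inv_natCast_pow hP (by omega)] at h4

lemma sq_sub_le {p : ℝ} (hp : 0 < p) (u v : ℝ) :
    |u ^ 2 - v ^ 2| ≤ (|u| ^ p + |v| ^ p) ^ (2 / p) := by
  have key : ∀ a b : ℝ, a ^ 2 ≤ (|a| ^ p + |b| ^ p) ^ (2 / p) := by
    intro a b
    have : a ^ 2 = (|a| ^ p) ^ (2 / p) := by
      rw [← Real.rpow_mul (abs_nonneg a), mul_div_cancel₀ _ hp.ne', ← sq_abs a]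
      norm_cast
    rw [this]
    apply Real.rpow_le_rpow (by positivity) _ (by positivity)
    have : 0 ≤ |b| ^ p := by positivity
    linarith
  have h1 := key u v
  have h2 := key v u
  rw [add_comm] at h2
  rw [abs_le]
  constructor <;> nlinarith [sq_nonneg u, sq_nonneg v]

lemma polyNorm_le {k m : ℕ} (hk1 : 1 ≤ k) (hk : m = 2 * k + 1)
    (e : Option (Fin k × Bool) ≃ Fin m) {p : ℝ} (hp : 0 < p) :
    polyNorm p m m (coef e) ≤ (((k : ℝ)⁻¹) ^ k) ^ (2 / p) := by
  apply Real.sSup_le _ (by positivity)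
  rintro y ⟨x, hx, rfl⟩
  rw [poly_eval hk, abs_mul, Finset.abs_prod]
  have hS0 : 0 ≤ ∑ i, |x i| ^ p := Finset.sum_nonneg fun i _ => by positivity
  have hS : ∑ i, |x i| ^ p ≤ 1 := by
    by_contra hlt
    push Not at hlt
    have := Real.one_lt_rpow hlt (show 0 < 1 / p by positivity)
    unfold lpNorm at hx
    linarith
  have hz : |x (e none)| ≤ 1 := by
    by_contra hlt
    push Not at hlt
    have h1 := Real.one_lt_rpow hlt hp
    have h2 := Finset.single_le_sum (f := fun i => |x i| ^ p) (fun i _ => by positivity)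
      (Finset.mem_univ (e none))
    linarith
  rw [← e.sum_comp] at hS
  simp only [Fintype.sum_option, Fintype.sum_prod_type, Fintype.sum_bool] at hS
  have hz0 : 0 ≤ |x (e none)| ^ p := by positivity
  have hA := amgm hk1 (fun i => |x (e (some (i, true)))| ^ p + |x (e (some (i, false)))| ^ p)
    (fun i => by positivity) (by linarith)
  calc _ ≤ 1 * ∏ i : Fin k,
        (|x (e (some (i, true)))| ^ p + |x (e (some (i, false)))| ^ p) ^ (2 / p) := by
        apply mul_le_mul hz _ (Finset.prod_nonneg fun i _ => abs_nonneg _) zero_le_one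
        exact Finset.prod_le_prod (fun i _ => abs_nonneg _) (fun i _ => sq_sub_le hp _ _)
    _ ≤ _ := by
        rw [one_mul, Real.finsetProd_rpow _ _ (fun i _ => by positivity)]
        exact Real.rpow_le_rpow (Finset.prod_nonneg fun i _ => by positivity) hA (by positivity)

lemma coef_sum_ge {k m : ℕ} (hk : m = 2 * k + 1)
    (e : Option (Fin k × Bool) ≃ Fin m) (q : ℝ) :
    (2 : ℝ) ^ k ≤ ∑ α ∈ Finset.Nat.antidiagonalTuple m m, |coef e α| ^ q := by
  calc (2 : ℝ) ^ k = ∑ α ∈ Finset.univ.image (expo e), |coef e α| ^ q := by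
        rw [Finset.sum_image (fun a _ b _ h => expo_inj e h)]
        simp [coef_expo, abs_sgnc]
    _ ≤ _ := by
        apply Finset.sum_le_sum_of_subset_of_nonneg
        · intro α hα
          obtain ⟨s, _, rfl⟩ := Finset.mem_image.1 hα
          exact expo_sum hk e s
        · intro i _ _; positivity

/-- For odd `m ≥ 3` and `2m ≤ p < ∞`, any constant `D` for the real
polynomial Hardy–Littlewood inequality satisfies
`D ≥ 2^{(mp+p-2m)(m-1)/(4mp)} ((m-1)/2)^{(m-1)/p}`. -/
theorem real_HL_lower_bound_odd (m : ℕ) (hm : 3 ≤ m) (hmo : Odd m)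
    (p : ℝ) (hp : 2 * (m : ℝ) ≤ p) (D : ℝ) (hD : 0 < D)
    (h : ∀ n : ℕ, 1 ≤ n → ∀ a : (Fin n → ℕ) → ℝ,
      (∑ α ∈ Finset.Nat.antidiagonalTuple n m, |a α|
          ^ (2 * (m : ℝ) * p / ((m : ℝ) * p + p - 2 * m)))
        ^ (((m : ℝ) * p + p - 2 * m) / (2 * (m : ℝ) * p)) ≤ D * polyNorm p m n a) :
    2 ^ ((((m : ℝ) * p + p - 2 * m) * ((m : ℝ) - 1)) / (4 * (m : ℝ) * p)) *
      (((m : ℝ) - 1) / 2) ^ (((m : ℝ) - 1) / p) ≤ D := by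
  obtain ⟨k, hk⟩ := hmo
  have hk1 : 1 ≤ k := by omega
  have hkR : (0 : ℝ) < k := by exact_mod_cast hk1
  have hmR : (m : ℝ) = 2 * k + 1 := by rw [hk]; push_cast; ring
  have hm3 : (3 : ℝ) ≤ m := by exact_mod_cast hm
  have hp0 : 0 < p := by linarith
  let e : Option (Fin k × Bool) ≃ Fin m :=
    Fintype.equivFinOfCardEq (by simp; omega)
  have h1 := h m (by omega) (coef e)
  have hE : 0 ≤ ((m : ℝ) * p + p - 2 * m) / (2 * (m : ℝ) * p) := by
    apply div_nonneg
    · nlinarith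
    · positivity
  have h2 := Real.rpow_le_rpow (by positivity) (coef_sum_ge hk e
    (2 * (m : ℝ) * p / ((m : ℝ) * p + p - 2 * m))) hE
  have h3 := mul_le_mul_of_nonneg_left (polyNorm_le hk1 hk e hp0) hD.le
  have h4 := (h2.trans h1).trans h3
  have e1 : ((m : ℝ) - 1) / 2 = k := by rw [hmR]; ring
  have e2 : ((m : ℝ) - 1) = 2 * k := by rw [hmR]; ring
  have e3 : (((k : ℝ)⁻¹) ^ k) ^ (2 / p) = ((k : ℝ) ^ (((m : ℝ) - 1) / p))⁻¹ := by
    rw [← Real.rpow_natCast, ← Real.rpow_mul (by positivity), Real.inv_rpow hkR.le, e2]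
    congr 2; ring
  have e4 : ((2 : ℝ) ^ k) ^ (((m : ℝ) * p + p - 2 * m) / (2 * (m : ℝ) * p)) =
      2 ^ ((((m : ℝ) * p + p - 2 * m) * ((m : ℝ) - 1)) / (4 * (m : ℝ) * p)) := by
    rw [← Real.rpow_natCast, ← Real.rpow_mul (by positivity), e2]
    congr 1
    have : (m : ℝ) ≠ 0 := by positivity
    field_simp
    ring
  rw [e3, e4, ← div_eq_mul_inv, le_div_iff₀ (by positivity)] at h4
  rw [e1]
  exact h4
end

section
/- Let m ≥ 4 be an integer and let p be a real number with 2m ≤ p < ∞. If D > 0 is such that for every n ≥ 1 and every m-homogeneous polynomial P(x) = ∑_{|α|=m} a_α x^α on the real space ℓ_p^n one has (∑_{|α|=m} |a_α|^{2mp/(mp+p−2m)})^{(mp+p−2m)/(2mp)} ≤ D·‖P‖, then D ≥ (2^{1/4})^{m − 1/m}. -/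
open Finset

/-- Coefficients of `x^(m-2k) (x^2-y^2)^k`. -/
noncomputable def cf (k : ℕ) (α : Fin 2 → ℕ) : ℝ :=
  if Even (α 1) then (-1) ^ (α 1 / 2) * (k.choose (α 1 / 2) : ℝ) else 0

lemma sum_cf (m k : ℕ) (hk : k = m / 2) (F : (Fin 2 → ℕ) → ℝ)
    (hF : ∀ α, ¬ Even (α 1) → F α = 0) :
    ∑ α ∈ Finset.Nat.antidiagonalTuple 2 m, F α
      = ∑ j ∈ Finset.range (k + 1), F ![m - 2 * j, 2 * j] := by
  symm
  apply Finset.sum_of_injOn (fun j => ![m - 2 * j, 2 * j])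
  · intro a _ b _ hab
    have := congrFun hab 1
    simp at this
    exact this
  · intro j hj
    simp only [Finset.coe_range, Set.mem_Iio] at hj
    simp only [Finset.mem_coe, Finset.Nat.mem_antidiagonalTuple, Fin.sum_univ_two]
    simp
    omega
  · intro α hα hn
    apply hF
    intro he
    apply hn
    obtain ⟨r, hr⟩ := he
    simp only [Finset.Nat.mem_antidiagonalTuple, Fin.sum_univ_two] at hα
    refine ⟨r, ?_, ?_⟩
    · simp; omega
    · funext i
      fin_cases i
      · simp; omega
      · simp; omega
  · intro j _
    rfl

lemma poly_eq (m k : ℕ) (hk : k = m / 2) (x : Fin 2 → ℝ) :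
    ∑ α ∈ Finset.Nat.antidiagonalTuple 2 m, cf k α * ∏ i, x i ^ α i
      = x 0 ^ (m - 2 * k) * (x 0 ^ 2 - x 1 ^ 2) ^ k := by
  rw [sum_cf m k hk (fun α => cf k α * ∏ i, x i ^ α i)]
  · rw [show x 0 ^ 2 - x 1 ^ 2 = -(x 1 ^ 2) + x 0 ^ 2 by ring, add_pow, Finset.mul_sum]
    apply Finset.sum_congr rfl
    intro j hj
    have hj' : j ≤ k := by simpa [Nat.lt_succ_iff] using hj
    have e : m - 2 * j = (m - 2 * k) + 2 * (k - j) := by omega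
    have hcf : cf k ![m - 2 * j, 2 * j] = (-1) ^ j * (k.choose j : ℝ) := by simp [cf]
    simp only [hcf, Fin.prod_univ_two]
    simp only [Matrix.cons_val_zero, Matrix.cons_val_one]
    rw [e, pow_add,
      pow_mul, pow_mul, neg_pow (x 1 ^ 2)]
    ring
  · intro α hα
    simp [cf, hα]

lemma sq_sum (m k : ℕ) (hk : k = m / 2) :
    ∑ α ∈ Finset.Nat.antidiagonalTuple 2 m, |cf k α| ^ 2 = (k.centralBinom : ℝ) := by
  rw [sum_cf m k hk (fun α => |cf k α| ^ 2)]
  · rw [Nat.centralBinom, ← Nat.sum_range_choose_sq]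
    push_cast
    apply Finset.sum_congr rfl
    intro j _
    simp [cf]
  · intro α hα
    simp [cf, hα]

lemma norm_le (p : ℝ) (hp : 0 < p) (m k : ℕ) (hk : k = m / 2) :
    polyNorm p m 2 (cf k) ≤ 1 := by
  apply Real.sSup_le _ zero_le_one
  rintro y ⟨x, hx, rfl⟩
  have hc : ∀ i, |x i| ≤ 1 := by
    intro i
    by_contra! hi
    have h1 : 1 < |x i| ^ p := Real.one_lt_rpow hi hp
    have h2 : |x i| ^ p ≤ ∑ i, |x i| ^ p :=
      Finset.single_le_sum (f := fun i => |x i| ^ p)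
        (fun i _ => Real.rpow_nonneg (abs_nonneg _) _) (Finset.mem_univ i)
    have h3 : 1 < lpNorm p x := Real.one_lt_rpow (h1.trans_le h2) (by positivity)
    linarith
  rw [poly_eq m k hk, abs_mul, abs_pow, abs_pow]
  have h0 := hc 0
  have h1 := hc 1
  rw [← sq_le_one_iff_abs_le_one] at h1
  have h0' := (sq_le_one_iff_abs_le_one _).2 h0
  have h2 : |x 0 ^ 2 - x 1 ^ 2| ≤ 1 := by
    rw [abs_le]; constructor <;> nlinarith [sq_nonneg (x 0), sq_nonneg (x 1)]
  exact mul_le_one₀ (pow_le_one₀ (abs_nonneg _) h0) (by positivity)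
    (pow_le_one₀ (abs_nonneg _) h2)

lemma l2_le {ι : Type*} (s : Finset ι) (a : ι → ℝ) (r : ℝ) (hr : 0 < r) (hr2 : r ≤ 2) :
    ∑ i ∈ s, |a i| ^ 2 ≤ ((∑ i ∈ s, |a i| ^ r) ^ (1 / r)) ^ 2 := by
  set S := ∑ i ∈ s, |a i| ^ r with hS
  have hn : ∀ i ∈ s, 0 ≤ |a i| ^ r := fun i _ => Real.rpow_nonneg (abs_nonneg _) _
  have hS0 : 0 ≤ S := Finset.sum_nonneg hn
  set T := S ^ (1 / r) with hT
  have hT0 : 0 ≤ T := Real.rpow_nonneg hS0 _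
  have hTr : T ^ r = S := by
    rw [hT, ← Real.rpow_mul hS0, one_div_mul_cancel hr.ne', Real.rpow_one]
  have split : ∀ t : ℝ, 0 ≤ t → t ^ 2 = t ^ r * t ^ (2 - r) := by
    intro t ht
    rw [← Real.rpow_add_of_nonneg ht hr.le (by linarith)]
    rw [← Real.rpow_natCast]; congr 1; push_cast; ring
  rw [split T hT0, hTr, hS, Finset.sum_mul]
  apply Finset.sum_le_sum
  intro i hi
  rw [split _ (abs_nonneg _)]
  apply mul_le_mul_of_nonneg_left _ (hn i hi)
  apply Real.rpow_le_rpow (abs_nonneg _) _ (by linarith)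
  have : |a i| ^ r ≤ T ^ r := by
    rw [hTr]; exact Finset.single_le_sum hn hi
  exact (Real.rpow_le_rpow_iff (abs_nonneg _) hT0 hr).1 this

lemma cb (k : ℕ) (hk : 2 ≤ k) : 3 * 2 ^ k ≤ 2 * k.centralBinom := by
  induction k, hk using Nat.le_induction with
  | base => decide
  | succ k hk ih =>
    have h := Nat.succ_mul_centralBinom_succ k
    have : 2 * k.centralBinom ≤ (k + 1).centralBinom := by
      have h0 : 0 ≤ k.centralBinom := Nat.zero_le _
      nlinarith
    rw [pow_succ]; omega

theorem real_HL_lower_bound_fourth_root (m : ℕ) (hm : 4 ≤ m)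
    (p : ℝ) (hp : 2 * (m : ℝ) ≤ p) (D : ℝ) (hD : 0 < D)
    (h : ∀ n : ℕ, 1 ≤ n → ∀ a : (Fin n → ℕ) → ℝ,
      (∑ α ∈ Finset.Nat.antidiagonalTuple n m, |a α|
          ^ (2 * (m : ℝ) * p / ((m : ℝ) * p + p - 2 * m)))
        ^ (((m : ℝ) * p + p - 2 * m) / (2 * (m : ℝ) * p)) ≤ D * polyNorm p m n a) :
    ((2 : ℝ) ^ ((1 : ℝ) / 4)) ^ ((m : ℝ) - 1 / m) ≤ D := by
  obtain ⟨k, hk⟩ : ∃ k, k = m / 2 := ⟨_, rfl⟩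
  have hm' : (4 : ℝ) ≤ m := by exact_mod_cast hm
  have hp0 : 0 < p := by linarith
  have hden : 0 < (m : ℝ) * p + p - 2 * m := by nlinarith
  set r := 2 * (m : ℝ) * p / ((m : ℝ) * p + p - 2 * m) with hr
  have hr0 : 0 < r := by positivity
  have hr2 : r ≤ 2 := by rw [hr, div_le_iff₀ hden]; nlinarith
  have h1 := h 2 (by norm_num) (cf k)
  have hinv : ((m : ℝ) * p + p - 2 * m) / (2 * (m : ℝ) * p) = 1 / r := by
    rw [hr, one_div_div]
  rw [hinv] at h1
  have h2 := l2_le (Finset.Nat.antidiagonalTuple 2 m) (cf k) r hr0 hr2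
  rw [sq_sum m k hk] at h2
  have h3 := norm_le p hp0 m k hk
  have h4 : (∑ α ∈ Finset.Nat.antidiagonalTuple 2 m, |cf k α| ^ r) ^ (1 / r) ≤ D :=
    h1.trans (by nlinarith)
  have h5 : (k.centralBinom : ℝ) ≤ D ^ 2 :=
    h2.trans (pow_le_pow_left₀ (Real.rpow_nonneg
      (Finset.sum_nonneg fun i _ => Real.rpow_nonneg (abs_nonneg _) _) _) h4 2)
  have h6 : (3 : ℝ) * 2 ^ k ≤ 2 * k.centralBinom := by exact_mod_cast cb k (by omega)
  have h7 : (3 : ℝ) * 2 ^ k ≤ 2 * D ^ 2 := by linarith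
  have h8 : (2 : ℝ) ^ m ≤ D ^ 4 := by
    have a1 : (2 : ℝ) ^ m ≤ 2 ^ (2 * k + 1) := pow_le_pow_right₀ (by norm_num) (by omega)
    have a2 : (2 : ℝ) ^ (2 * k + 1) = 2 * (2 ^ k) ^ 2 := by ring
    have a3 : (3 * (2 : ℝ) ^ k) ^ 2 ≤ (2 * D ^ 2) ^ 2 := pow_le_pow_left₀ (by positivity) h7 2
    nlinarith [sq_nonneg ((2 : ℝ) ^ k)]
  apply le_of_pow_le_pow_left₀ (n := 4) (by norm_num) hD.le
  refine le_trans ?_ h8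
  rw [← Real.rpow_mul (by norm_num), ← Real.rpow_natCast, ← Real.rpow_mul (by norm_num),
    ← Real.rpow_natCast]
  apply Real.rpow_le_rpow_of_exponent_le (by norm_num)
  have : (0 : ℝ) < 1 / m := by positivity
  push_cast
  linarith
end
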